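/- The four smooth functions 1, z, √(1+z²)·sinh x, √(1+z²)·cosh x on ℝ³ span a four-dimensional subspace of C^∞(ℝ³) that is closed under the Lagrange bracket, and the resulting four-dimensional real Lie algebra is isomorphic to gl(2,ℝ). Explicitly, writing f₁ = 1, f₂ = z, f₃ = √(1+z²) sinh x, f₄ = √(1+z²) cosh x, one has {f₁, f_i} = 0 for all i, {f₂, f₃} = −f₄, {f₂, f₄} = −f₃, and {f₃, f₄} = f₂. -/

import Mathlib

/-!
Under the Lagrange bracket `f₁ = 1` acts as `∂_y` and `f₂ = z` acts as `-∂_x`, so brackets with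
`f₁` and `f₂` are partial derivatives; on functions independent of `y` the bracket is the Poisson
bracket in `(x, z)`, which gives `{f₃, f₄} = f₂` from `cosh² - sinh² = 1`. The matrices `1`,
`diag(1/2, -1/2)`, `(E₁₂ + E₂₁)/2`, `(E₂₁ - E₁₂)/2` satisfy the same relations, and as the bracket
is bilinear on differentiable functions, matching the two bases is an isomorphism onto `gl(2, ℝ)`.
-/

noncomputable section

/-- `ℝ³` with coordinates `(x, y, z)`. -/
abbrev R3 : Type := ℝ × ℝ × ℝ

/-- Partial derivative in `x` of a function on `ℝ³`. -/
noncomputable def px (f : R3 → ℝ) (p : R3) : ℝ := fderiv ℝ f p (1, 0, 0)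

/-- Partial derivative in `y` of a function on `ℝ³`. -/
noncomputable def py (f : R3 → ℝ) (p : R3) : ℝ := fderiv ℝ f p (0, 1, 0)

/-- Partial derivative in `z` of a function on `ℝ³`. -/
noncomputable def pz (f : R3 → ℝ) (p : R3) : ℝ := fderiv ℝ f p (0, 0, 1)

/-- The Lagrange bracket
`{f,g} = f_x g_z − f_z g_x + z (f_y g_z − f_z g_y) + f g_y − g f_y`. -/
noncomputable def lagr (f g : R3 → ℝ) (p : R3) : ℝ :=
  px f p * pz g p - pz f p * px g p
    + p.2.2 * (py f p * pz g p - pz f p * py g p)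
    + f p * py g p - g p * py f p

/-- `f₁ = 1`. -/
noncomputable def c1 : R3 → ℝ := fun _ => 1

/-- `f₂ = z`. -/
noncomputable def c2 : R3 → ℝ := fun p => p.2.2

/-- `f₃ = √(1+z²)·sinh x`. -/
noncomputable def c3 : R3 → ℝ := fun p => Real.sqrt (1 + p.2.2 ^ 2) * Real.sinh p.1

/-- `f₄ = √(1+z²)·cosh x`. -/
noncomputable def c4 : R3 → ℝ := fun p => Real.sqrt (1 + p.2.2 ^ 2) * Real.cosh p.1

/-- The span of `f₁, f₂, f₃, f₄` inside the functions on `ℝ³`. -/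
noncomputable def Vspan : Submodule ℝ (R3 → ℝ) := Submodule.span ℝ {c1, c2, c3, c4}

open Module Matrix
open scoped ContDiff

section LagrangeBracket

theorem lagr_swap (f g : R3 → ℝ) : lagr f g = -lagr g f := by
  funext p
  simp only [lagr, Pi.neg_apply]
  ring

theorem lagr_self (f : R3 → ℝ) : lagr f f = 0 :=
  self_eq_neg.mp (lagr_swap f f)

theorem lagr_add_left {f₁ f₂ : R3 → ℝ} (hf₁ : Differentiable ℝ f₁) (hf₂ : Differentiable ℝ f₂)
    (g : R3 → ℝ) : lagr (f₁ + f₂) g = lagr f₁ g + lagr f₂ g := by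
  funext p
  simp only [lagr, px, py, pz, fderiv_add (hf₁ p) (hf₂ p), _root_.add_apply,
    Pi.add_apply]
  ring

theorem lagr_smul_left (a : ℝ) (f g : R3 → ℝ) : lagr (a • f) g = a • lagr f g := by
  funext p
  simp only [lagr, px, py, pz, fderiv_const_smul_field, _root_.smul_apply,
    Pi.smul_apply, smul_eq_mul]
  ring

theorem lagr_add_right (f : R3 → ℝ) {g₁ g₂ : R3 → ℝ} (hg₁ : Differentiable ℝ g₁)
    (hg₂ : Differentiable ℝ g₂) : lagr f (g₁ + g₂) = lagr f g₁ + lagr f g₂ := by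
  rw [lagr_swap, lagr_add_left hg₁ hg₂, neg_add, ← lagr_swap, ← lagr_swap]

theorem lagr_smul_right (a : ℝ) (f g : R3 → ℝ) : lagr f (a • g) = a • lagr f g := by
  rw [lagr_swap, lagr_smul_left, ← smul_neg, ← lagr_swap]

theorem map_lie_eq_lagr_of_basis {ι L : Type*} [LinearOrder ι] [LieRing L] [LieAlgebra ℝ L]
    (b : Basis ι ℝ L) (ψ : L →ₗ[ℝ] R3 → ℝ) (hψ : ∀ x, Differentiable ℝ (ψ x))
    (hb : ∀ i j, i < j → ψ ⁅b i, b j⁆ = lagr (ψ (b i)) (ψ (b j))) (x y : L) :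
    ψ ⁅x, y⁆ = lagr (ψ x) (ψ y) := by
  let bracket : L →ₗ[ℝ] L →ₗ[ℝ] R3 → ℝ := LinearMap.mk₂ ℝ (fun x y ↦ lagr (ψ x) (ψ y))
    (fun x x' y ↦ by simp only [map_add, lagr_add_left (hψ x) (hψ x')])
    (fun a x y ↦ by simp only [map_smul, lagr_smul_left])
    (fun x y y' ↦ by simp only [map_add, lagr_add_right _ (hψ y) (hψ y')])
    (fun a x y ↦ by simp only [map_smul, lagr_smul_right])
  suffices (LieModule.toEnd ℝ L L : L →ₗ[ℝ] End ℝ L).compr₂ ψ = bracket from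
    LinearMap.congr_fun₂ this x y
  refine LinearMap.ext_basis b b fun i j ↦ ?_
  change ψ ⁅b i, b j⁆ = lagr (ψ (b i)) (ψ (b j))
  rcases lt_trichotomy i j with hij | rfl | hji
  · exact hb i j hij
  · rw [lie_self, map_zero, lagr_self]
  · rw [← lie_skew, map_neg, hb j i hji, ← lagr_swap]

theorem lagr_of_py_eq_zero {f g : R3 → ℝ} {p : R3} (hf : py f p = 0) (hg : py g p = 0) :
    lagr f g p = px f p * pz g p - pz f p * px g p := by
  simp only [lagr, hf, hg]
  ring

theorem fderiv_c1 (p : R3) : fderiv ℝ c1 p = 0 :=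
  (hasFDerivAt_const (1 : ℝ) p).fderiv

theorem fderiv_c2 (p : R3) :
    fderiv ℝ c2 p = (ContinuousLinearMap.snd ℝ ℝ ℝ).comp (.snd ℝ ℝ (ℝ × ℝ)) :=
  (hasFDerivAt_snd.comp p hasFDerivAt_snd).fderiv

theorem lagr_c1_left (g : R3 → ℝ) : lagr c1 g = py g := by
  funext p
  simp [lagr, px, py, pz, fderiv_c1, c1]

theorem lagr_c2_left (g : R3 → ℝ) : lagr c2 g = -px g := by
  funext p
  simp [lagr, px, py, pz, fderiv_c2, c2]

end LagrangeBracket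

section PartialDerivatives

variable {u v : ℝ → ℝ} {u' v' : ℝ} {p : R3}

theorem hasFDerivAt_separated (hu : HasDerivAt u u' p.2.2) (hv : HasDerivAt v v' p.1) :
    HasFDerivAt (fun q : R3 ↦ u q.2.2 * v q.1)
      (u p.2.2 • v' • .fst ℝ ℝ (ℝ × ℝ) +
        v p.1 • u' • (ContinuousLinearMap.snd ℝ ℝ ℝ).comp (.snd ℝ ℝ (ℝ × ℝ))) p :=
  (hu.comp_hasFDerivAt p (hasFDerivAt_snd.comp p hasFDerivAt_snd)).mul
    (hv.comp_hasFDerivAt p hasFDerivAt_fst)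

theorem px_separated (hu : HasDerivAt u u' p.2.2) (hv : HasDerivAt v v' p.1) :
    px (fun q ↦ u q.2.2 * v q.1) p = u p.2.2 * v' := by
  simp [px, (hasFDerivAt_separated hu hv).fderiv]

theorem py_separated (hu : HasDerivAt u u' p.2.2) (hv : HasDerivAt v v' p.1) :
    py (fun q ↦ u q.2.2 * v q.1) p = 0 := by
  simp [py, (hasFDerivAt_separated hu hv).fderiv]

theorem pz_separated (hu : HasDerivAt u u' p.2.2) (hv : HasDerivAt v v' p.1) :
    pz (fun q ↦ u q.2.2 * v q.1) p = u' * v p.1 := by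
  simp [pz, (hasFDerivAt_separated hu hv).fderiv, mul_comm]

theorem hasDerivAt_sqrt_one_add_sq (t : ℝ) :
    HasDerivAt (fun s ↦ √(1 + s ^ 2)) (t / √(1 + t ^ 2)) t := by
  convert ((hasDerivAt_pow 2 t).const_add 1).sqrt (by positivity) using 1
  field_simp
  norm_num [mul_comm]

theorem px_c3 : px c3 = c4 :=
  funext fun _ ↦ px_separated (hasDerivAt_sqrt_one_add_sq _) (Real.hasDerivAt_sinh _)

theorem px_c4 : px c4 = c3 :=
  funext fun _ ↦ px_separated (hasDerivAt_sqrt_one_add_sq _) (Real.hasDerivAt_cosh _)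

theorem py_c2 : py c2 = 0 := by
  funext p
  simp [py, fderiv_c2]

theorem py_c3 : py c3 = 0 :=
  funext fun _ ↦ py_separated (hasDerivAt_sqrt_one_add_sq _) (Real.hasDerivAt_sinh _)

theorem py_c4 : py c4 = 0 :=
  funext fun _ ↦ py_separated (hasDerivAt_sqrt_one_add_sq _) (Real.hasDerivAt_cosh _)

theorem pz_c3 (p : R3) : pz c3 p = p.2.2 / √(1 + p.2.2 ^ 2) * Real.sinh p.1 :=
  pz_separated (hasDerivAt_sqrt_one_add_sq _) (Real.hasDerivAt_sinh _)

theorem pz_c4 (p : R3) : pz c4 p = p.2.2 / √(1 + p.2.2 ^ 2) * Real.cosh p.1 :=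
  pz_separated (hasDerivAt_sqrt_one_add_sq _) (Real.hasDerivAt_cosh _)

theorem lagr_c3_c4 : lagr c3 c4 = c2 := by
  funext p
  have hr : √(1 + p.2.2 ^ 2) ≠ 0 := by positivity
  rw [lagr_of_py_eq_zero (congrFun py_c3 p) (congrFun py_c4 p), px_c3, px_c4, pz_c3, pz_c4]
  calc
    c4 p * (p.2.2 / √(1 + p.2.2 ^ 2) * Real.cosh p.1)
        - p.2.2 / √(1 + p.2.2 ^ 2) * Real.sinh p.1 * c3 p
      = p.2.2 * (Real.cosh p.1 ^ 2 - Real.sinh p.1 ^ 2) := by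
        simp only [c3, c4]
        field_simp
    _ = c2 p := by rw [Real.cosh_sq_sub_sinh_sq, mul_one, c2]

end PartialDerivatives

section Generators

/-- The functions `f₁, f₂, f₃, f₄` as a family, indexed from `0`. -/
def lagrGenerator : Fin 4 → R3 → ℝ := ![c1, c2, c3, c4]

theorem span_range_lagrGenerator : Submodule.span ℝ (Set.range lagrGenerator) = Vspan := by
  simp only [lagrGenerator, Vspan, range_cons, range_empty, Set.singleton_union, Set.union_empty]

theorem contDiff_lagrGenerator (i : Fin 4) : ContDiff ℝ ∞ (lagrGenerator i) := by
  have hr : ContDiff ℝ ∞ fun p : R3 ↦ √(1 + p.2.2 ^ 2) :=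
    ContDiff.sqrt (by fun_prop) fun p ↦ by positivity
  have hx : ContDiff ℝ ∞ fun p : R3 ↦ p.1 := contDiff_fst
  fin_cases i
  · exact contDiff_const
  · exact contDiff_snd.comp contDiff_snd
  · exact hr.mul hx.sinh
  · exact hr.mul hx.cosh

theorem contDiff_of_mem_Vspan {f : R3 → ℝ} (hf : f ∈ Vspan) : ContDiff ℝ ∞ f := by
  rw [← span_range_lagrGenerator] at hf
  induction hf using Submodule.span_induction with
  | mem _ hg => obtain ⟨i, rfl⟩ := hg; exact contDiff_lagrGenerator i
  | zero => exact contDiff_const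
  | add _ _ _ _ hg hh => exact hg.add hh
  | smul a _ _ hg => exact contDiff_const.smul hg

theorem linearIndependent_lagrGenerator : LinearIndependent ℝ lagrGenerator := by
  rw [Fintype.linearIndependent_iff]
  intro a ha
  have value_at (x z : ℝ) : a 0 + a 1 * z + a 2 * (√(1 + z ^ 2) * Real.sinh x)
      + a 3 * (√(1 + z ^ 2) * Real.cosh x) = 0 := by
    simpa [Fin.sum_univ_four, lagrGenerator, c1, c2, c3, c4] using congrFun ha (x, 0, z)
  have at_zero : a 0 + a 3 = 0 := by simpa using value_at 0 0
  have at_one : a 0 + a 2 * Real.sinh 1 + a 3 * Real.cosh 1 = 0 := by simpa using value_at 1 0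
  have at_neg_one : a 0 - a 2 * Real.sinh 1 + a 3 * Real.cosh 1 = 0 := by
    simpa [sub_eq_add_neg] using value_at (-1) 0
  have h3 : a 3 = 0 :=
    (mul_eq_zero.mp (by linarith : a 3 * (Real.cosh 1 - 1) = 0)).resolve_right
      (sub_pos.mpr (Real.one_lt_cosh.mpr one_ne_zero)).ne'
  have h2 : a 2 = 0 :=
    (mul_eq_zero.mp (by linarith : a 2 * Real.sinh 1 = 0)).resolve_right
      (Real.sinh_pos_iff.mpr one_pos).ne'
  have h0 : a 0 = 0 := by linarith
  have h1 : a 1 = 0 := by simpa [h0, h2, h3] using value_at 0 1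
  intro i
  fin_cases i <;> assumption

/-- The basis `f₁, f₂, f₃, f₄` of their span. -/
def vspanBasis : Basis (Fin 4) ℝ Vspan :=
  (Basis.span linearIndependent_lagrGenerator).map (.ofEq _ _ span_range_lagrGenerator)

theorem coe_vspanBasis (i : Fin 4) : (vspanBasis i : R3 → ℝ) = lagrGenerator i := by
  simp [vspanBasis, Basis.span_apply]

end Generators

section GeneralLinear

attribute [local instance] LieRing.ofAssociativeRing

/-- Matrices in `gl(2, ℝ)` with the same commutation relations as `f₁, f₂, f₃, f₄`. -/
def gl2Generator : Fin 4 → Matrix (Fin 2) (Fin 2) ℝ :=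
  ![1, !![1 / 2, 0; 0, -1 / 2], !![0, 1 / 2; 1 / 2, 0], !![0, -1 / 2; 1 / 2, 0]]

theorem linearIndependent_gl2Generator : LinearIndependent ℝ gl2Generator := by
  rw [Fintype.linearIndependent_iff]
  intro a ha
  have entry (i j : Fin 2) := congrFun₂ ha i j
  have h00 : a 0 + a 1 / 2 = 0 := by
    simpa [Fin.sum_univ_four, gl2Generator, div_eq_mul_inv] using entry 0 0
  have h01 : a 2 / 2 - a 3 / 2 = 0 := by
    simpa [Fin.sum_univ_four, gl2Generator, div_eq_mul_inv, sub_eq_add_neg] using entry 0 1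
  have h10 : a 2 / 2 + a 3 / 2 = 0 := by
    simpa [Fin.sum_univ_four, gl2Generator, div_eq_mul_inv] using entry 1 0
  have h11 : a 0 - a 1 / 2 = 0 := by
    simpa [Fin.sum_univ_four, gl2Generator, div_eq_mul_inv, sub_eq_add_neg] using entry 1 1
  intro i
  fin_cases i <;> dsimp <;> linarith

/-- The basis of `gl(2, ℝ)` formed by `gl2Generator`. -/
def gl2Basis : Basis (Fin 4) ℝ (Matrix (Fin 2) (Fin 2) ℝ) :=
  basisOfLinearIndependentOfCardEqFinrank linearIndependent_gl2Generator
    (by simp [finrank_matrix])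

theorem gl2Basis_apply (i : Fin 4) : gl2Basis i = gl2Generator i := by
  simp [gl2Basis]

theorem lie_gl2Basis_zero (j : Fin 4) : ⁅gl2Basis 0, gl2Basis j⁆ = 0 := by
  simp [gl2Basis_apply, gl2Generator, Ring.lie_def]

theorem lie_gl2Basis_one_two : ⁅gl2Basis 1, gl2Basis 2⁆ = -gl2Basis 3 := by
  simp only [gl2Basis_apply, gl2Generator, Ring.lie_def, cons_val]
  ext i j
  fin_cases i <;> fin_cases j <;> norm_num

theorem lie_gl2Basis_one_three : ⁅gl2Basis 1, gl2Basis 3⁆ = -gl2Basis 2 := by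
  simp only [gl2Basis_apply, gl2Generator, Ring.lie_def, cons_val]
  ext i j
  fin_cases i <;> fin_cases j <;> norm_num

theorem lie_gl2Basis_two_three : ⁅gl2Basis 2, gl2Basis 3⁆ = gl2Basis 1 := by
  simp only [gl2Basis_apply, gl2Generator, Ring.lie_def, cons_val]
  ext i j
  fin_cases i <;> fin_cases j <;> norm_num

/-- The isomorphism from `gl(2, ℝ)` to the span of `f₁, f₂, f₃, f₄` matching the two bases. -/
def gl2EquivVspan : Matrix (Fin 2) (Fin 2) ℝ ≃ₗ[ℝ] Vspan :=
  gl2Basis.equiv vspanBasis (.refl _)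

theorem gl2EquivVspan_gl2Basis (i : Fin 4) :
    (gl2EquivVspan (gl2Basis i) : R3 → ℝ) = lagrGenerator i := by
  simp [gl2EquivVspan, coe_vspanBasis]

theorem gl2EquivVspan_lie (M N : Matrix (Fin 2) (Fin 2) ℝ) :
    (gl2EquivVspan ⁅M, N⁆ : R3 → ℝ) = lagr (gl2EquivVspan M) (gl2EquivVspan N) := by
  refine map_lie_eq_lagr_of_basis gl2Basis (Vspan.subtype ∘ₗ gl2EquivVspan.toLinearMap)
    (fun M ↦ (contDiff_of_mem_Vspan (gl2EquivVspan M).2).differentiable (by simp)) ?_ M N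
  intro i j hij
  simp only [LinearMap.comp_apply, LinearEquiv.coe_coe, Submodule.subtype_apply]
  fin_cases i <;> fin_cases j <;> first
    | exact absurd hij (by decide)
    | simp [lie_gl2Basis_zero, lie_gl2Basis_one_two, lie_gl2Basis_one_three,
        lie_gl2Basis_two_three, gl2EquivVspan_gl2Basis, lagrGenerator, lagr_c1_left,
        lagr_c2_left, lagr_c3_c4, px_c3, px_c4, py_c2, py_c3, py_c4]

end GeneralLinear

/-- The functions `1, z, √(1+z²) sinh x, √(1+z²) cosh x` span a
four-dimensional subspace of `C^∞(ℝ³)` closed under the Lagrange bracket, the resulting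
Lie algebra is isomorphic to `gl(2,ℝ)`, and explicitly `{f₁, f_i} = 0`,
`{f₂,f₃} = −f₄`, `{f₂,f₄} = −f₃`, `{f₃,f₄} = f₂`. -/
theorem stmt18 :
    Module.finrank ℝ ↥Vspan = 4 ∧
    (∀ u ∈ Vspan, ∀ v ∈ Vspan, lagr u v ∈ Vspan) ∧
    (∀ p : R3,
      lagr c1 c1 p = 0 ∧ lagr c1 c2 p = 0 ∧ lagr c1 c3 p = 0 ∧ lagr c1 c4 p = 0 ∧
      lagr c2 c3 p = -c4 p ∧ lagr c2 c4 p = -c3 p ∧ lagr c3 c4 p = c2 p) ∧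
    (∃ φ : ↥Vspan ≃ₗ[ℝ] Matrix (Fin 2) (Fin 2) ℝ,
      ∀ u v w : ↥Vspan, (w : R3 → ℝ) = lagr (u : R3 → ℝ) (v : R3 → ℝ) →
        φ w = φ u * φ v - φ v * φ u) := by
  refine ⟨?_, fun u hu v hv ↦ ?_, fun p ↦ ?_, gl2EquivVspan.symm, fun u v w hw ↦ ?_⟩
  · rw [finrank_eq_card_basis vspanBasis, Fintype.card_fin]
  · obtain ⟨M, hM⟩ := gl2EquivVspan.surjective ⟨u, hu⟩
    obtain ⟨N, hN⟩ := gl2EquivVspan.surjective ⟨v, hv⟩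
    have h := gl2EquivVspan_lie M N
    rw [hM, hN] at h
    exact h ▸ (gl2EquivVspan ⁅M, N⁆).2
  · simp [lagr_self, lagr_c1_left, lagr_c2_left, lagr_c3_c4, px_c3, px_c4, py_c2, py_c3, py_c4]
  · rw [← Ring.lie_def, LinearEquiv.symm_apply_eq]
    apply Subtype.ext
    rw [hw, gl2EquivVspan_lie, LinearEquiv.apply_symm_apply, LinearEquiv.apply_symm_apply]
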